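/- For all reals A₁ ≥ 0, A₂ ≥ 0 and ε > 0 there exist a smooth time-dependent function F : ℝ × ℂ → ℝ with F t z = 0 whenever π|z|² ≥ A₁ + A₂ + ε, and a Hamiltonian flow b : ℝ → ℂ → ℂ of F with b 0 = id, such that the image under the time-one map b 1 of the closed disc {z ∈ ℂ : π|z|² ≤ A₁} is disjoint from the closed disc {z ∈ ℂ : π|z|² ≤ A₂}. (In words: a disc of area A₁ can be disjoined from a disc of area A₂ by a Hamiltonian isotopy supported inside any disc of area greater than A₁ + A₂.) -/

import Mathlib

open Real
open Set Filter Topology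

/-- `γ` solves Hamilton's equation of `F` on the time interval `[0,1]`. -/
def HamSol (F : ℝ × ℂ → ℝ) (γ : ℝ → ℂ) : Prop :=
  ∀ t ∈ Icc (0 : ℝ) 1, HasDerivWithinAt γ
    (Complex.I * gradient (fun w => F (t, w)) (γ t)) (Icc 0 1) t

/-- Coordinate formula for the Hamiltonian vector field. -/
lemma ham_formula (f : ℂ → ℝ) (z : ℂ) :
    Complex.I * gradient f z =
      ((-(fderiv ℝ f z Complex.I) : ℝ) : ℂ) + ((fderiv ℝ f z 1 : ℝ) : ℂ) * Complex.I := by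
  have h1 : inner ℝ (gradient f z) (1 : ℂ) = fderiv ℝ f z 1 := inner_gradient_left
  have h2 : inner ℝ (gradient f z) Complex.I = fderiv ℝ f z Complex.I := inner_gradient_left
  rw [← h1, ← h2, Complex.inner, Complex.inner]
  apply Complex.ext <;> simp

lemma ham_formula_joint (F : ℝ × ℂ → ℝ) (hF : ContDiff ℝ (⊤ : ℕ∞) F) (t : ℝ) (z : ℂ) :
    Complex.I * gradient (fun w => F (t, w)) z =
      ((-(fderiv ℝ F (t, z) (0, Complex.I)) : ℝ) : ℂ)
        + ((fderiv ℝ F (t, z) (0, 1) : ℝ) : ℂ) * Complex.I := by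
  have hd : HasFDerivAt F (fderiv ℝ F (t, z)) (t, z) :=
    (hF.differentiable (by simp) (t, z)).hasFDerivAt
  have h := hd.comp z (hasFDerivAt_prodMk_right t z)
  have h' : fderiv ℝ (fun w => F (t, w)) z
      = (fderiv ℝ F (t, z)).comp (ContinuousLinearMap.inr ℝ ℝ ℂ) := h.fderiv
  rw [ham_formula, h']
  simp

lemma ham_smooth (F : ℝ × ℂ → ℝ) (hF : ContDiff ℝ (⊤ : ℕ∞) F) :
    ContDiff ℝ (⊤ : ℕ∞)
      (fun p : ℝ × ℂ => Complex.I * gradient (fun w => F (p.1, w)) p.2) := by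
  have h : ∀ v : ℝ × ℂ, ContDiff ℝ (⊤ : ℕ∞) (fun p => fderiv ℝ F p v) := fun v =>
    (hF.fderiv_right (m := (⊤ : ℕ∞)) (by simp)).clm_apply contDiff_const
  have e : (fun p : ℝ × ℂ => Complex.I * gradient (fun w => F (p.1, w)) p.2)
      = fun p => Complex.ofRealCLM (-(fderiv ℝ F p (0, Complex.I)))
        + Complex.ofRealCLM (fderiv ℝ F p (0, 1)) * Complex.I := by
    funext p
    rw [ham_formula_joint F hF]
    simp
  rw [e]
  exact (Complex.ofRealCLM.contDiff.comp (h _).neg).add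
    ((Complex.ofRealCLM.contDiff.comp (h _)).mul contDiff_const)

lemma ham_compact (F : ℝ × ℂ → ℝ) (hF : ContDiff ℝ (⊤ : ℕ∞) F) (hc : HasCompactSupport F) :
    HasCompactSupport
      (fun p : ℝ × ℂ => Complex.I * gradient (fun w => F (p.1, w)) p.2) := by
  refine (hc.fderiv ℝ).mono ?_
  intro p hp hp0
  apply hp
  simp only
  rw [ham_formula_joint F hF, show fderiv ℝ F (p.1, p.2) = 0 from hp0]
  simp

lemma ham_exists (F : ℝ × ℂ → ℝ) (hF : ContDiff ℝ (⊤ : ℕ∞) F) (hc : HasCompactSupport F)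
    (t₀ : Icc (0 : ℝ) 1) (z : ℂ) : ∃ γ : ℝ → ℂ, γ t₀ = z ∧ HamSol F γ := by
  obtain ⟨K, hK⟩ := ContDiff.lipschitzWith_of_hasCompactSupport (ham_compact F hF hc)
    (ham_smooth F hF) (by simp)
  obtain ⟨C, hC⟩ := (ham_compact F hF hc).exists_bound_of_continuous (ham_smooth F hF).continuous
  have hC0 : 0 ≤ C := (norm_nonneg _).trans (hC (0, 0))
  have hpl : IsPicardLindelof
      (fun t z => Complex.I * gradient (fun w => F (t, w)) z) t₀ z ⟨C, hC0⟩ 0 ⟨C, hC0⟩ K := by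
    refine ⟨?_, ?_, ?_, ?_⟩
    · intro t _ x _ y _
      have := hK (t, x) (t, y)
      simpa [Prod.edist_eq] using this
    · intro x _
      exact ((ham_smooth F hF).continuous.comp (by fun_prop : Continuous fun t : ℝ => (t, x))).continuousOn
    · intro t _ x _
      exact hC (t, x)
    · have h0 := t₀.2.1
      have h1 := t₀.2.2
      have : max (1 - (t₀ : ℝ)) (t₀ - 0) ≤ 1 := max_le (by linarith) (by linarith)
      change C * max (1 - (t₀ : ℝ)) (t₀ - 0) ≤ C - ((0 : NNReal) : ℝ)
      rw [NNReal.coe_zero, sub_zero C]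
      exact mul_le_of_le_one_right hC0 this
  exact hpl.exists_eq_forall_mem_Icc_hasDerivWithinAt₀

/-- Smooth positive approximation from above of the half-chord function. -/
lemma approx (s η : ℝ) (hη : 0 < η) : ∃ w : ℝ → ℝ, ContDiff ℝ (⊤ : ℕ∞) w ∧ (∀ u, 0 < w u) ∧
    (∀ u, √(s - u ^ 2) ≤ w u) ∧ (∀ u, w u ≤ √(s - u ^ 2) + η) ∧
    (∀ u, w u ^ 2 ≤ max (s - u ^ 2) 0 + η ^ 2) := by
  have hd : 0 < 4 * η ^ 4 := by positivity
  have hpos : ∀ p : ℝ, 0 < (p + √(p ^ 2 + 4 * η ^ 4)) / 2 := by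
    intro p
    have h1 : |p| < √(p ^ 2 + 4 * η ^ 4) := by
      apply Real.lt_sqrt_of_sq_lt
      rw [sq_abs]; linarith
    have := neg_abs_le p
    linarith
  have hlow : ∀ p : ℝ, p ≤ (p + √(p ^ 2 + 4 * η ^ 4)) / 2 := by
    intro p
    have h1 : |p| ≤ √(p ^ 2 + 4 * η ^ 4) := by
      apply Real.le_sqrt_of_sq_le
      rw [sq_abs]; linarith
    have := le_abs_self p
    linarith
  have hup : ∀ p : ℝ, (p + √(p ^ 2 + 4 * η ^ 4)) / 2 ≤ max p 0 + η ^ 2 := by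
    intro p
    have h1 : √(p ^ 2 + 4 * η ^ 4) ≤ |p| + 2 * η ^ 2 := by
      apply Real.sqrt_le_iff.2
      refine ⟨by positivity, ?_⟩
      have : 0 ≤ |p| * η ^ 2 := by positivity
      nlinarith [sq_abs p]
    rcases le_total 0 p with h | h
    · rw [max_eq_left h]; rw [abs_of_nonneg h] at h1; linarith
    · rw [max_eq_right h]; rw [abs_of_nonpos h] at h1; linarith
  have hup' : ∀ p : ℝ, √((p + √(p ^ 2 + 4 * η ^ 4)) / 2) ^ 2 ≤ max p 0 + η ^ 2 := by
    intro p
    rw [Real.sq_sqrt (hpos p).le]; exact hup p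
  refine ⟨fun u => √(((s - u ^ 2) + √((s - u ^ 2) ^ 2 + 4 * η ^ 4)) / 2), ?_, ?_, ?_, ?_, ?_⟩
  · refine ContDiff.sqrt ?_ (fun u => (hpos _).ne')
    refine ContDiff.div_const (ContDiff.add (by fun_prop) (ContDiff.sqrt (by fun_prop) ?_)) _
    intro u
    positivity
  · intro u; exact Real.sqrt_pos.2 (hpos _)
  · intro u; exact Real.sqrt_le_sqrt (hlow _)
  · intro u
    apply Real.sqrt_le_iff.2
    refine ⟨by positivity, (hup _).trans ?_⟩
    have h0 := Real.sqrt_nonneg (s - u ^ 2)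
    rcases le_total 0 (s - u ^ 2) with h | h
    · rw [max_eq_left h]; nlinarith [Real.sq_sqrt h]
    · rw [max_eq_right h]; nlinarith [mul_nonneg h0 hη.le]
  · intro u; exact hup' _

/-- Antiderivative. -/
lemma antider (w : ℝ → ℝ) (hw : ContDiff ℝ (⊤ : ℕ∞) w) (a : ℝ) :
    (∀ x, HasDerivAt (fun u => ∫ y in a..u, w y) (w x) x) ∧
    ContDiff ℝ (⊤ : ℕ∞) (fun u => ∫ y in a..u, w y) := by
  have h : ∀ x, HasDerivAt (fun u => ∫ y in a..u, w y) (w x) x := fun x =>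
    hw.continuous.integral_hasStrictDerivAt a x |>.hasDerivAt
  refine ⟨h, contDiff_infty_iff_deriv.2 ⟨fun x => (h x).differentiableAt, ?_⟩⟩
  rw [show deriv (fun u => ∫ y in a..u, w y) = w from funext fun x => (h x).deriv]
  exact hw

lemma chord_cont (r : ℝ) : Continuous fun u : ℝ => √(r ^ 2 - u ^ 2) := by fun_prop

lemma half_disc (r : ℝ) (hr : 0 ≤ r) : ∫ u in (-r)..r, √(r ^ 2 - u ^ 2) = π * r ^ 2 / 2 := by
  have h := intervalIntegral.smul_integral_comp_mul_left (a := -1) (b := 1)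
    (fun u : ℝ => √(r ^ 2 - u ^ 2)) r
  have e : ∀ x : ℝ, √(r ^ 2 - (r * x) ^ 2) = r * √(1 - x ^ 2) := by
    intro x
    rw [show r ^ 2 - (r * x) ^ 2 = r ^ 2 * (1 - x ^ 2) by ring, Real.sqrt_mul (sq_nonneg r),
      Real.sqrt_sq hr]
  simp only [e, intervalIntegral.integral_const_mul, integral_sqrt_one_sub_sq, smul_eq_mul] at h
  rw [show r * -1 = -r by ring, show r * 1 = r by ring] at h
  rw [← h]; ring

lemma chord_refl (R c : ℝ) : ∫ u in (-R)..(-c), √(R ^ 2 - u ^ 2) = ∫ u in c..R, √(R ^ 2 - u ^ 2) := by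
  have := intervalIntegral.integral_comp_neg (a := c) (b := R) (fun u : ℝ => √(R ^ 2 - u ^ 2))
  simpa using this.symm

/-- Same as the half disc, but with a larger interval. -/
lemma half_disc' (r R : ℝ) (hr : 0 ≤ r) (hR : r ≤ R) :
    ∫ u in (-R)..r, √(r ^ 2 - u ^ 2) = π * r ^ 2 / 2 := by
  have h0 : ∫ u in (-R)..(-r), √(r ^ 2 - u ^ 2) = 0 := by
    rw [intervalIntegral.integral_congr (g := fun _ => 0)]
    · simp
    · intro u hu
      rw [uIcc_of_le (by linarith)] at hu
      apply Real.sqrt_eq_zero_of_nonpos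
      nlinarith [hu.2]
  have := intervalIntegral.integral_add_adjacent_intervals
    ((chord_cont r).intervalIntegrable (-R) (-r)) ((chord_cont r).intervalIntegrable (μ := MeasureTheory.volume) (-r) r)
  rw [← this, h0, half_disc r hr, zero_add]

/-- The interpolated profile. -/
noncomputable def wt (w0 w1 : ℝ → ℝ) (t x : ℝ) : ℝ :=
  (1 - Real.smoothTransition t) * w0 x + Real.smoothTransition t * w1 x

/-- The one-dimensional transport velocity. -/
noncomputable def hvel (w0 w1 W0 W1 : ℝ → ℝ) (t x : ℝ) : ℝ :=
  deriv Real.smoothTransition t * (W0 x - W1 x) / wt w0 w1 t x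

/-- The cut-off Hamiltonian. -/
noncomputable def Ham (w0 w1 W0 W1 : ℝ → ℝ) (S Q : ℝ) (p : ℝ × ℂ) : ℝ :=
  Real.smoothTransition ((Q - (p.2.re ^ 2 + p.2.im ^ 2)) / (Q - S)) *
    (-(p.2.im * hvel w0 w1 W0 W1 p.1 p.2.re))

lemma wt_pos {w0 w1 : ℝ → ℝ} (h0 : ∀ u, 0 < w0 u) (h1 : ∀ u, 0 < w1 u) (t x : ℝ) :
    0 < wt w0 w1 t x := by
  unfold wt
  have a := Real.smoothTransition.nonneg t
  have b := Real.smoothTransition.le_one t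
  rcases a.eq_or_lt with h | h
  · rw [← h]; simpa using h0 x
  · have := mul_pos h (h1 x)
    have := mul_nonneg (sub_nonneg.2 b) (h0 x).le
    linarith

lemma st_smooth : ContDiff ℝ (⊤ : ℕ∞) Real.smoothTransition := Real.smoothTransition.contDiff

lemma st_deriv_smooth : ContDiff ℝ (⊤ : ℕ∞) (deriv Real.smoothTransition) :=
  (contDiff_infty_iff_deriv.1 st_smooth).2

lemma st_hasDeriv (t : ℝ) :
    HasDerivAt Real.smoothTransition (deriv Real.smoothTransition t) t :=
  (st_smooth.differentiable (by simp) t).hasDerivAt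

lemma st_deriv_zero (t : ℝ) (ht : t ≤ 0 ∨ 1 ≤ t) : deriv Real.smoothTransition t = 0 := by
  rcases ht with h | h
  · apply IsLocalMin.deriv_eq_zero
    apply Filter.Eventually.of_forall
    intro x
    rw [Real.smoothTransition.zero_of_nonpos h]
    exact Real.smoothTransition.nonneg x
  · apply IsLocalMax.deriv_eq_zero
    apply Filter.Eventually.of_forall
    intro x
    rw [Real.smoothTransition.one_of_one_le h]
    exact Real.smoothTransition.le_one x

lemma Ham_smooth {w0 w1 W0 W1 : ℝ → ℝ} (S Q : ℝ)
    (hw0 : ContDiff ℝ (⊤ : ℕ∞) w0) (hw1 : ContDiff ℝ (⊤ : ℕ∞) w1)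
    (hW0 : ContDiff ℝ (⊤ : ℕ∞) W0) (hW1 : ContDiff ℝ (⊤ : ℕ∞) W1)
    (h0 : ∀ u, 0 < w0 u) (h1 : ∀ u, 0 < w1 u) :
    ContDiff ℝ (⊤ : ℕ∞) (Ham w0 w1 W0 W1 S Q) := by
  have hre : ContDiff ℝ (⊤ : ℕ∞) (fun p : ℝ × ℂ => p.2.re) :=
    Complex.reCLM.contDiff.comp contDiff_snd
  have him : ContDiff ℝ (⊤ : ℕ∞) (fun p : ℝ × ℂ => p.2.im) :=
    Complex.imCLM.contDiff.comp contDiff_snd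
  have ht : ContDiff ℝ (⊤ : ℕ∞) (fun p : ℝ × ℂ => p.1) := contDiff_fst
  unfold Ham hvel
  refine ContDiff.mul (st_smooth.comp ?_) (ContDiff.neg (him.mul (ContDiff.div ?_ ?_ ?_)))
  · exact (contDiff_const.sub ((hre.pow 2).add (him.pow 2))).div_const _
  · exact (st_deriv_smooth.comp ht).mul ((hW0.comp hre).sub (hW1.comp hre))
  · unfold wt
    exact ((contDiff_const.sub (st_smooth.comp ht)).mul (hw0.comp hre)).add
      ((st_smooth.comp ht).mul (hw1.comp hre))
  · intro p; exact (wt_pos h0 h1 _ _).ne'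

lemma Ham_zero (w0 w1 W0 W1 : ℝ → ℝ) (S Q : ℝ) (hSQ : S < Q) (t : ℝ) (z : ℂ)
    (hz : Q ≤ ‖z‖ ^ 2) : Ham w0 w1 W0 W1 S Q (t, z) = 0 := by
  unfold Ham
  rw [Complex.sq_norm, Complex.normSq_apply] at hz
  rw [Real.smoothTransition.zero_of_nonpos, zero_mul]
  apply div_nonpos_of_nonpos_of_nonneg _ (by linarith)
  simp only
  nlinarith

lemma Ham_compact (w0 w1 W0 W1 : ℝ → ℝ) (S Q : ℝ) (hSQ : S < Q) :
    HasCompactSupport (Ham w0 w1 W0 W1 S Q) := by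
  apply HasCompactSupport.intro
    (K := Icc (0 : ℝ) 1 ×ˢ Metric.closedBall (0 : ℂ) (|Q| + 1))
    (isCompact_Icc.prod (isCompact_closedBall _ _))
  rintro ⟨t, z⟩ hp
  by_cases ht : t ∈ Icc (0 : ℝ) 1
  · apply Ham_zero _ _ _ _ _ _ hSQ
    have hz : |Q| + 1 < ‖z‖ := by
      by_contra h
      exact hp ⟨ht, by simpa using not_lt.1 h⟩
    nlinarith [le_abs_self Q, abs_nonneg Q]
  · unfold Ham hvel
    have : t ≤ 0 ∨ 1 ≤ t := by
      by_contra! h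
      exact ht ⟨h.1.le, h.2.le⟩
    simp [st_deriv_zero t this]

/-- The equations of motion in the region where the cut-off is one. -/
lemma Ham_field {w0 w1 W0 W1 : ℝ → ℝ} {S Q : ℝ} (hSQ : S < Q)
    (hw0 : ContDiff ℝ (⊤ : ℕ∞) w0) (hw1 : ContDiff ℝ (⊤ : ℕ∞) w1)
    (hW0 : ∀ x, HasDerivAt W0 (w0 x) x) (hW1 : ∀ x, HasDerivAt W1 (w1 x) x)
    (h0 : ∀ u, 0 < w0 u) (h1 : ∀ u, 0 < w1 u) (t : ℝ) (z : ℂ)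
    (hz : z.re ^ 2 + z.im ^ 2 < S) :
    Complex.I * gradient (fun w => Ham w0 w1 W0 W1 S Q (t, w)) z =
      ((hvel w0 w1 W0 W1 t z.re : ℝ) : ℂ) +
      ((-(z.im * (deriv Real.smoothTransition t * ((w0 z.re - w1 z.re) * wt w0 w1 t z.re
        - (W0 z.re - W1 z.re) * ((1 - Real.smoothTransition t) * deriv w0 z.re
          + Real.smoothTransition t * deriv w1 z.re)) / wt w0 w1 t z.re ^ 2)) : ℝ) : ℂ)
        * Complex.I := by
  set d := deriv Real.smoothTransition t * ((w0 z.re - w1 z.re) * wt w0 w1 t z.re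
        - (W0 z.re - W1 z.re) * ((1 - Real.smoothTransition t) * deriv w0 z.re
          + Real.smoothTransition t * deriv w1 z.re)) / wt w0 w1 t z.re ^ 2 with hd
  have hh : HasDerivAt (hvel w0 w1 W0 W1 t) d z.re := by
    have a0 := (hw0.differentiable (by simp) z.re).hasDerivAt
    have a1 := (hw1.differentiable (by simp) z.re).hasDerivAt
    have aw : HasDerivAt (wt w0 w1 t) ((1 - Real.smoothTransition t) * deriv w0 z.re
          + Real.smoothTransition t * deriv w1 z.re) z.re :=
      (a0.const_mul _).add (a1.const_mul _)
    have := (((hW0 z.re).sub (hW1 z.re)).const_mul (deriv Real.smoothTransition t)).div aw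
      (wt_pos h0 h1 t z.re).ne'
    refine this.congr_deriv ?_
    rw [hd]
    simp only [Pi.sub_apply]
    ring
  have hre : HasFDerivAt (fun w : ℂ => w.re) Complex.reCLM z := Complex.reCLM.hasFDerivAt
  have him : HasFDerivAt (fun w : ℂ => w.im) Complex.imCLM z := Complex.imCLM.hasFDerivAt
  have hF := (him.mul (hh.comp_hasFDerivAt z hre)).neg
  have hev : (fun w => Ham w0 w1 W0 W1 S Q (t, w)) =ᶠ[𝓝 z]
      (fun w : ℂ => -(w.im * hvel w0 w1 W0 W1 t w.re)) := by
    have hc : Continuous fun w : ℂ => w.re ^ 2 + w.im ^ 2 := by fun_prop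
    filter_upwards [hc.continuousAt.eventually (gt_mem_nhds hz)] with w hw
    unfold Ham
    rw [Real.smoothTransition.one_of_one_le, one_mul]
    rw [one_le_div (by linarith)]
    simp only
    linarith
  have hF' := (hF.congr_of_eventuallyEq hev).fderiv
  rw [ham_formula, hF']
  simp

lemma wt_le {w0 w1 : ℝ → ℝ} (t x B : ℝ) (h0 : w0 x ≤ B) (h1 : w1 x ≤ B) :
    wt w0 w1 t x ≤ B := by
  unfold wt
  have a := Real.smoothTransition.nonneg t
  have b := Real.smoothTransition.le_one t
  nlinarith

/-- The conservation laws: as long as the cut-off is not felt,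
the two invariants are constant. -/
lemma invariants {w0 w1 W0 W1 : ℝ → ℝ} {S Q : ℝ} (hSQ : S < Q)
    (hw0 : ContDiff ℝ (⊤ : ℕ∞) w0) (hw1 : ContDiff ℝ (⊤ : ℕ∞) w1)
    (hW0 : ∀ x, HasDerivAt W0 (w0 x) x) (hW1 : ∀ x, HasDerivAt W1 (w1 x) x)
    (h0 : ∀ u, 0 < w0 u) (h1 : ∀ u, 0 < w1 u) (γ : ℝ → ℂ)
    (hγ : HamSol (Ham w0 w1 W0 W1 S Q) γ) (τ : ℝ) (hτ0 : 0 ≤ τ) (hτ1 : τ ≤ 1)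
    (hS : ∀ t ∈ Ico 0 τ, (γ t).re ^ 2 + (γ t).im ^ 2 < S) :
    wt W0 W1 τ (γ τ).re = W0 (γ 0).re ∧
      (γ τ).im / wt w0 w1 τ (γ τ).re = (γ 0).im / w0 (γ 0).re := by
  have hre : ∀ t ∈ Icc (0:ℝ) 1, HasDerivWithinAt (fun s => (γ s).re)
      (Complex.I * gradient (fun w => Ham w0 w1 W0 W1 S Q (t, w)) (γ t)).re (Icc 0 1) t :=
    fun t ht => Complex.reCLM.hasFDerivAt.comp_hasDerivWithinAt t (hγ t ht)
  have him : ∀ t ∈ Icc (0:ℝ) 1, HasDerivWithinAt (fun s => (γ s).im)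
      (Complex.I * gradient (fun w => Ham w0 w1 W0 W1 S Q (t, w)) (γ t)).im (Icc 0 1) t :=
    fun t ht => Complex.imCLM.hasFDerivAt.comp_hasDerivWithinAt t (hγ t ht)
  -- derivative of `wt v0 v1 t (x t)` for any pair of profiles
  have key : ∀ (v0 v1 v0' v1' : ℝ → ℝ), (∀ x, HasDerivAt v0 (v0' x) x) →
      (∀ x, HasDerivAt v1 (v1' x) x) → ∀ t ∈ Icc (0:ℝ) 1,
      HasDerivWithinAt (fun s => wt v0 v1 s (γ s).re)
        (deriv Real.smoothTransition t * (v1 (γ t).re - v0 (γ t).re) +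
          wt v0' v1' t (γ t).re *
          (Complex.I * gradient (fun w => Ham w0 w1 W0 W1 S Q (t, w)) (γ t)).re)
        (Icc 0 1) t := by
    intro v0 v1 v0' v1' hv0 hv1 t ht
    have a0 := (hv0 (γ t).re).comp_hasDerivWithinAt t (hre t ht)
    have a1 := (hv1 (γ t).re).comp_hasDerivWithinAt t (hre t ht)
    have s := (st_hasDeriv t).hasDerivWithinAt (s := Icc 0 1)
    have := ((s.const_sub 1).mul a0).add (s.mul a1)
    refine this.congr_deriv ?_
    unfold wt
    simp only [Function.comp]
    ring
  have kW := key W0 W1 w0 w1 hW0 hW1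
  have kw := key w0 w1 (deriv w0) (deriv w1)
    (fun x => (hw0.differentiable (by simp) x).hasDerivAt)
    (fun x => (hw1.differentiable (by simp) x).hasDerivAt)
  have kq := fun t ht => (him t ht).div (kw t ht) (wt_pos h0 h1 t (γ t).re).ne'
  have hsub : Icc 0 τ ⊆ Icc (0:ℝ) 1 := Icc_subset_Icc le_rfl hτ1
  have right : ∀ (f : ℝ → ℝ) (f' : ℝ) (t : ℝ), t ∈ Ico 0 τ →
      HasDerivWithinAt f f' (Icc 0 1) t → f' = 0 → HasDerivWithinAt f 0 (Ici t) t := by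
    intro f f' t ht hf h
    subst h
    refine hf.mono_of_mem_nhdsWithin ?_
    exact mem_of_superset (Icc_mem_nhdsGE (ht.2.trans_le hτ1)) (Icc_subset_Icc ht.1 le_rfl)
  have hmem : τ ∈ Icc 0 τ := ⟨hτ0, le_rfl⟩
  constructor
  · have := constant_of_has_deriv_right_zero (f := fun s => wt W0 W1 s (γ s).re) (a := 0) (b := τ)
      (fun t ht => ((kW t (hsub ht)).continuousWithinAt).mono hsub)
      (fun t ht => right _ _ t ht (kW t (hsub ⟨ht.1, ht.2.le⟩)) (by
        rw [Ham_field hSQ hw0 hw1 hW0 hW1 h0 h1 t (γ t) (hS t ht)]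
        simp only [Complex.add_re, Complex.ofReal_re, Complex.re_ofReal_mul, Complex.I_re]
        unfold hvel
        have := (wt_pos h0 h1 t (γ t).re).ne'
        field_simp
        ring)) τ hmem
    rw [this]
    simp [wt]
  · have := constant_of_has_deriv_right_zero
      (f := fun s => (γ s).im / wt w0 w1 s (γ s).re) (a := 0) (b := τ)
      (fun t ht => ((kq t (hsub ht)).continuousWithinAt).mono hsub)
      (fun t ht => right _ _ t ht (kq t (hsub ⟨ht.1, ht.2.le⟩)) (by
        rw [Ham_field hSQ hw0 hw1 hW0 hW1 h0 h1 t (γ t) (hS t ht)]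
        simp only [Complex.add_re, Complex.ofReal_re, Complex.re_ofReal_mul, Complex.I_re,
          Complex.add_im, Complex.ofReal_im, Complex.im_ofReal_mul, Complex.I_im]
        unfold hvel
        have := (wt_pos h0 h1 t (γ t).re).ne'
        rw [show wt (deriv w0) (deriv w1) t (γ t).re = (1 - Real.smoothTransition t) *
          deriv w0 (γ t).re + Real.smoothTransition t * deriv w1 (γ t).re from rfl]
        field_simp
        ring)) τ hmem
    rw [this]
    simp [wt]

/-- A disc of radius `r` can be squeezed into the part `{re z < c}` of a larger disc, provided
that the areas allow it. -/
lemma squeeze (r R1 Q c : ℝ) (hr : 0 ≤ r) (hrR : r ≤ R1) (hQ : R1 ^ 2 < Q)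
    (hc1 : -R1 ≤ c) (hc2 : c ≤ R1)
    (hc : π * r ^ 2 / 2 < ∫ u in (-R1)..c, √(R1 ^ 2 - u ^ 2)) :
    ∃ F : ℝ × ℂ → ℝ, ContDiff ℝ (⊤ : ℕ∞) F ∧ HasCompactSupport F ∧
      (∀ (t : ℝ) (z : ℂ), Q ≤ ‖z‖ ^ 2 → F (t, z) = 0) ∧
      ∀ γ : ℝ → ℂ, HamSol F γ → ‖γ 0‖ ≤ r → (γ 1).re < c := by
  obtain ⟨η, hη, hη1, hη2⟩ : ∃ η : ℝ, 0 < η ∧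
      π * r ^ 2 / 2 + η * (r + R1) < ∫ u in (-R1)..c, √(R1 ^ 2 - u ^ 2) ∧
      R1 ^ 2 + η ^ 2 < (R1 ^ 2 + Q) / 2 := by
    have c1 : Continuous fun η : ℝ => π * r ^ 2 / 2 + η * (r + R1) := by fun_prop
    have c2 : Continuous fun η : ℝ => R1 ^ 2 + η ^ 2 := by fun_prop
    have e1 := (c1.tendsto 0).eventually
      (eventually_lt_nhds (b := ∫ u in (-R1)..c, √(R1 ^ 2 - u ^ 2)) (by simpa using hc))
    have e2 := (c2.tendsto 0).eventually
      (eventually_lt_nhds (b := (R1 ^ 2 + Q) / 2) (by norm_num; linarith))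
    have e3 : ∀ᶠ η : ℝ in 𝓝[>] 0, 0 < η := self_mem_nhdsWithin
    obtain ⟨η, a, b, d⟩ := (e3.and ((e1.and e2).filter_mono nhdsWithin_le_nhds)).exists
    exact ⟨η, a, b, d⟩
  obtain ⟨w0, hw0, p0, l0, u0, s0⟩ := approx (r ^ 2) η hη
  obtain ⟨w1, hw1, p1, l1, u1, s1⟩ := approx (R1 ^ 2) η hη
  obtain ⟨dW0, hW0⟩ := antider w0 hw0 (-R1)
  obtain ⟨dW1, hW1⟩ := antider w1 hw1 (-R1)
  have z0 : (∫ y in (-R1)..(-R1), w0 y) = 0 := by simp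
  have z1 : (∫ y in (-R1)..(-R1), w1 y) = 0 := by simp
  have hlow : (∫ u in (-R1)..c, √(R1 ^ 2 - u ^ 2)) ≤ ∫ y in (-R1)..c, w1 y :=
    intervalIntegral.integral_mono_on hc1 ((chord_cont R1).intervalIntegrable _ _)
      (hw1.continuous.intervalIntegrable _ _) (fun x _ => l1 x)
  have hup : (∫ y in (-R1)..r, w0 y) ≤ π * r ^ 2 / 2 + η * (r + R1) := by
    have a : (∫ y in (-R1)..r, w0 y) ≤ ∫ y in (-R1)..r, (√(r ^ 2 - y ^ 2) + η) :=
      intervalIntegral.integral_mono_on (by linarith) (hw0.continuous.intervalIntegrable _ _)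
        (((chord_cont r).add continuous_const).intervalIntegrable _ _) (fun x _ => u0 x)
    rw [intervalIntegral.integral_add ((chord_cont r).intervalIntegrable _ _)
      (continuous_const.intervalIntegrable _ _), half_disc' r R1 hr hrR,
      intervalIntegral.integral_const] at a
    rw [smul_eq_mul] at a
    linarith
  generalize hG0 : (fun u => ∫ y in (-R1)..u, w0 y) = W0 at dW0 hW0
  generalize hG1 : (fun u => ∫ y in (-R1)..u, w1 y) = W1 at dW1 hW1
  rw [show (∫ y in (-R1)..(-R1), w0 y) = W0 (-R1) by rw [← hG0]] at z0
  rw [show (∫ y in (-R1)..(-R1), w1 y) = W1 (-R1) by rw [← hG1]] at z1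
  rw [show (∫ y in (-R1)..c, w1 y) = W1 c by rw [← hG1]] at hlow
  rw [show (∫ y in (-R1)..r, w0 y) = W0 r by rw [← hG0]] at hup
  have hlt : W0 r < W1 c := by linarith
  have m0 : StrictMono W0 := strictMono_of_deriv_pos fun x => by rw [(dW0 x).deriv]; exact p0 x
  have m1 : StrictMono W1 := strictMono_of_deriv_pos fun x => by rw [(dW1 x).deriv]; exact p1 x
  have mt : ∀ t, StrictMono (wt W0 W1 t) := fun t => strictMono_of_deriv_pos fun x => by
    have : HasDerivAt (wt W0 W1 t) (wt w0 w1 t x) x :=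
      ((dW0 x).const_mul _).add ((dW1 x).const_mul _)
    rw [this.deriv]; exact wt_pos p0 p1 t x
  set S := (R1 ^ 2 + Q) / 2 with hS
  have hSQ : S < Q := by rw [hS]; linarith
  refine ⟨Ham w0 w1 W0 W1 S Q, Ham_smooth S Q hw0 hw1 hW0 hW1 p0 p1,
    Ham_compact w0 w1 W0 W1 S Q hSQ, Ham_zero w0 w1 W0 W1 S Q hSQ, ?_⟩
  intro γ hγ hγ0
  have hn0 : (γ 0).re ^ 2 + (γ 0).im ^ 2 ≤ r ^ 2 := by
    have : ‖γ 0‖ ^ 2 ≤ r ^ 2 := by gcongr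
    rw [Complex.sq_norm, Complex.normSq_apply] at this
    nlinarith
  have hx0 : |(γ 0).re| ≤ r := abs_le_of_sq_le_sq (by nlinarith) hr
  have hx0' := abs_le.1 hx0
  have hy0 : |(γ 0).im / w0 (γ 0).re| ≤ 1 := by
    rw [abs_div, abs_of_pos (p0 _), div_le_one (p0 _)]
    refine le_trans (Real.le_sqrt_of_sq_le ?_) (l0 _)
    rw [sq_abs]; linarith
  have hm1 : 0 ≤ W0 (γ 0).re := by
    have := m0.monotone (show -R1 ≤ (γ 0).re by linarith)
    linarith
  have hm2 : W0 (γ 0).re ≤ W0 r := m0.monotone hx0'.2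
  have conf : ∀ τ, 0 ≤ τ → τ ≤ 1 →
      (∀ t ∈ Ico 0 τ, (γ t).re ^ 2 + (γ t).im ^ 2 < S) →
      (γ τ).re ^ 2 + (γ τ).im ^ 2 < S := by
    intro τ h0 h1 h
    obtain ⟨i1, i2⟩ := invariants hSQ hw0 hw1 dW0 dW1 p0 p1 γ hγ τ h0 h1 h
    have hxl : -R1 ≤ (γ τ).re := by
      rw [← (mt τ).le_iff_le, i1]
      simpa [wt, z0, z1] using hm1
    have hxu : (γ τ).re ≤ R1 := by
      rw [← (mt τ).le_iff_le, i1]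
      have a := Real.smoothTransition.nonneg τ
      have b := Real.smoothTransition.le_one τ
      have e0 : W0 r ≤ W0 R1 := m0.monotone hrR
      have e1 : W0 r ≤ W1 R1 := hlt.le.trans (m1.monotone hc2)
      unfold wt
      nlinarith
    have hx2 : (γ τ).re ^ 2 ≤ R1 ^ 2 := by nlinarith
    rw [← i2, abs_div, abs_of_pos (wt_pos p0 p1 _ _), div_le_one (wt_pos p0 p1 _ _)] at hy0
    have hr2 : r ^ 2 ≤ R1 ^ 2 := by gcongr
    have B0 : w0 (γ τ).re ≤ √(R1 ^ 2 - (γ τ).re ^ 2 + η ^ 2) := by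
      apply Real.le_sqrt_of_sq_le
      have : max (r ^ 2 - (γ τ).re ^ 2) 0 ≤ R1 ^ 2 - (γ τ).re ^ 2 :=
        max_le (by linarith) (by linarith)
      linarith [s0 (γ τ).re]
    have B1 : w1 (γ τ).re ≤ √(R1 ^ 2 - (γ τ).re ^ 2 + η ^ 2) := by
      apply Real.le_sqrt_of_sq_le
      have : max (R1 ^ 2 - (γ τ).re ^ 2) 0 ≤ R1 ^ 2 - (γ τ).re ^ 2 :=
        max_le (by linarith) (by linarith)
      linarith [s1 (γ τ).re]
    have hB := hy0.trans (wt_le τ _ _ B0 B1)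
    have hB2 := (Real.le_sqrt (abs_nonneg _) (by nlinarith [sq_nonneg η])).1 hB
    rw [sq_abs] at hB2
    linarith
  -- the curve never leaves the region
  have hcont : ContinuousOn (fun t => (γ t).re ^ 2 + (γ t).im ^ 2) (Icc 0 1) := by
    have hg : ContinuousOn γ (Icc 0 1) := fun t ht => (hγ t ht).continuousWithinAt
    have hc : Continuous fun w : ℂ => w.re ^ 2 + w.im ^ 2 := by fun_prop
    exact hc.comp_continuousOn hg
  have all : ∀ t ∈ Icc (0:ℝ) 1, (γ t).re ^ 2 + (γ t).im ^ 2 < S := by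
    by_contra! hne
    have hcl : IsClosed (Icc (0:ℝ) 1 ∩ (fun t => (γ t).re ^ 2 + (γ t).im ^ 2) ⁻¹' Ici S) :=
      hcont.preimage_isClosed_of_isClosed isClosed_Icc isClosed_Ici
    set T := Icc (0:ℝ) 1 ∩ (fun t => (γ t).re ^ 2 + (γ t).im ^ 2) ⁻¹' Ici S
    have hTne : T.Nonempty := by
      obtain ⟨t, ht, h⟩ := hne
      exact ⟨t, ht, h⟩
    have hTb : BddBelow T := ⟨0, fun t ht => ht.1.1⟩
    have hin := hcl.csInf_mem hTne hTb
    refine absurd (conf (sInf T) hin.1.1 hin.1.2 ?_) (not_lt.2 hin.2)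
    intro t ht
    by_contra hh
    have : t ∈ T := ⟨⟨ht.1, ht.2.le.trans hin.1.2⟩, not_lt.1 hh⟩
    exact absurd (csInf_le hTb this) (not_le.2 ht.2)
  obtain ⟨i1, -⟩ := invariants hSQ hw0 hw1 dW0 dW1 p0 p1 γ hγ 1 zero_le_one le_rfl
    (fun t ht => all t ⟨ht.1, ht.2.le⟩)
  have : W1 (γ 1).re = W0 (γ 0).re := by simpa [wt] using i1
  rw [← m1.lt_iff_lt, this]
  linarith

lemma gradient_neg_arg (f : ℂ → ℝ) (hf : Differentiable ℝ f) (z : ℂ) :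
    gradient (fun w => f (-w)) z = - gradient f (-z) := by
  have h := (hf (-z)).hasFDerivAt.comp z (hasFDerivAt_id z).neg
  have h' : fderiv ℝ (fun w => f (-w)) z = -(fderiv ℝ f (-z)) := by
    refine HasFDerivAt.fderiv (h.congr_fderiv ?_)
    ext v
    all_goals simp
  unfold gradient
  rw [h', map_neg]

/-- The mirror image of `squeeze`. -/
lemma squeeze_neg (r R1 Q c : ℝ) (hr : 0 ≤ r) (hrR : r ≤ R1) (hQ : R1 ^ 2 < Q)
    (hc1 : -R1 ≤ c) (hc2 : c ≤ R1)
    (hc : π * r ^ 2 / 2 < ∫ u in (-R1)..c, √(R1 ^ 2 - u ^ 2)) :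
    ∃ F : ℝ × ℂ → ℝ, ContDiff ℝ (⊤ : ℕ∞) F ∧ HasCompactSupport F ∧
      (∀ (t : ℝ) (z : ℂ), Q ≤ ‖z‖ ^ 2 → F (t, z) = 0) ∧
      ∀ γ : ℝ → ℂ, HamSol F γ → ‖γ 0‖ ≤ r → -c < (γ 1).re := by
  obtain ⟨F, hF, hcs, hz, hs⟩ := squeeze r R1 Q c hr hrR hQ hc1 hc2 hc
  refine ⟨fun p => F (p.1, -p.2), ?_, ?_, ?_, ?_⟩
  · exact hF.comp (contDiff_fst.prodMk contDiff_snd.neg)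
  · exact hcs.comp_homeomorph ((Homeomorph.refl ℝ).prodCongr (Homeomorph.neg ℂ))
  · intro t z h
    exact hz t (-z) (by simpa using h)
  · intro γ hγ h0
    have : HamSol F (fun t => -γ t) := by
      intro t ht
      have h := (hγ t ht).neg
      refine h.congr_deriv ?_
      have hd : Differentiable ℝ (fun w => F (t, w)) :=
        (hF.comp (contDiff_const.prodMk contDiff_id)).differentiable (by simp)
      simp only
      rw [gradient_neg_arg (fun w => F (t, w)) hd]
      simp
    have := hs _ this (by simpa using h0)
    simp only [Complex.neg_re] at this
    linarith

/-- Concatenation of two Hamiltonian motions, the second one run backwards. -/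
lemma concat (F G : ℝ × ℂ → ℝ) (hF : ContDiff ℝ (⊤ : ℕ∞) F) (hG : ContDiff ℝ (⊤ : ℕ∞) G)
    (α β : ℝ → ℝ) (hα : ContDiff ℝ (⊤ : ℕ∞) α) (hβ : ContDiff ℝ (⊤ : ℕ∞) β)
    (hα01 : ∀ t, α t ∈ Icc (0 : ℝ) 1) (hβ01 : ∀ t, β t ∈ Icc (0 : ℝ) 1)
    (hsplit : ∀ t, (β t = 1 ∧ deriv β t = 0) ∨ (α t = 1 ∧ deriv α t = 0))
    (γ δ : ℝ → ℂ) (hγ : HamSol F γ) (hδ : HamSol G δ) (hp : γ 1 = δ 1) (t : ℝ) :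
    HasDerivAt (fun s => γ (α s) + δ (β s) - γ 1)
      (Complex.I * gradient (fun w => deriv α t * F (α t, w) + deriv β t * G (β t, w))
        (γ (α t) + δ (β t) - γ 1)) t := by
  have dα : HasDerivAt α (deriv α t) t := (hα.differentiable (by simp) t).hasDerivAt
  have dβ : HasDerivAt β (deriv β t) t := (hβ.differentiable (by simp) t).hasDerivAt
  have h1 := (hγ (α t) (hα01 t)).scomp_hasDerivAt t dα hα01
  have h2 := (hδ (β t) (hβ01 t)).scomp_hasDerivAt t dβ hβ01
  refine ((h1.add h2).sub_const (γ 1)).congr_deriv ?_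
  have dF : Differentiable ℝ (fun w => F (α t, w)) :=
    (hF.comp (contDiff_const.prodMk contDiff_id)).differentiable (by simp)
  have dG : Differentiable ℝ (fun w => G (β t, w)) :=
    (hG.comp (contDiff_const.prodMk contDiff_id)).differentiable (by simp)
  have hgr : ∀ z, gradient (fun w => deriv α t * F (α t, w) + deriv β t * G (β t, w)) z
      = deriv α t • gradient (fun w => F (α t, w)) z
        + deriv β t • gradient (fun w => G (β t, w)) z := by
    intro z
    unfold gradient
    have : fderiv ℝ (fun w => deriv α t * F (α t, w) + deriv β t * G (β t, w)) z
        = deriv α t • fderiv ℝ (fun w => F (α t, w)) z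
          + deriv β t • fderiv ℝ (fun w => G (β t, w)) z :=
      (((dF z).hasFDerivAt.const_mul _).add ((dG z).hasFDerivAt.const_mul _)).fderiv
    rw [this, map_add]
    simp
  rw [hgr]
  rcases hsplit t with ⟨a, b⟩ | ⟨a, b⟩
  · rw [b, a, ← hp]
    simp
    ring
  · rw [b, a]
    simp
    ring

theorem stmt_5 (A₁ A₂ ε : ℝ) (hA₁ : 0 ≤ A₁) (hA₂ : 0 ≤ A₂) (hε : 0 < ε) :
    ∃ (F : ℝ × ℂ → ℝ) (b : ℝ → ℂ → ℂ),
      ContDiff ℝ (⊤ : ℕ∞) F ∧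
      (∀ (t : ℝ) (z : ℂ), A₁ + A₂ + ε ≤ π * ‖z‖ ^ 2 → F (t, z) = 0) ∧
      b 0 = id ∧
      (∀ (z : ℂ) (t : ℝ),
        HasDerivAt (fun s => b s z) (Complex.I * gradient (fun w => F (t, w)) (b t z)) t) ∧
      Disjoint (b 1 '' {z : ℂ | π * ‖z‖ ^ 2 ≤ A₁}) {z : ℂ | π * ‖z‖ ^ 2 ≤ A₂} := by
  have hπ := Real.pi_pos
  -- radii
  have rad : ∀ a : ℝ, 0 ≤ a → π * √(a / π) ^ 2 = a := by
    intro a ha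
    rw [Real.sq_sqrt (by positivity)]
    field_simp
  have radle : ∀ a : ℝ, 0 ≤ a → ∀ z : ℂ, π * ‖z‖ ^ 2 ≤ a → ‖z‖ ≤ √(a / π) := by
    intro a ha z hz
    apply Real.le_sqrt_of_sq_le
    rw [le_div_iff₀ hπ]; linarith
  set R := √((A₁ + A₂ + ε / 2) / π) with hR
  have hR0 : 0 ≤ R := Real.sqrt_nonneg _
  have hRR : π * R ^ 2 = A₁ + A₂ + ε / 2 := rad _ (by linarith)
  set Q := (A₁ + A₂ + ε) / π with hQ
  have hRQ : R ^ 2 < Q := by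
    rw [hQ, lt_div_iff₀ hπ]; linarith
  have hr1 : √(A₁ / π) ≤ R := by
    apply Real.sqrt_le_sqrt; gcongr; linarith
  have hr2 : √(A₂ / π) ≤ R := by
    apply Real.sqrt_le_sqrt; gcongr; linarith
  -- the cutting line
  obtain ⟨c, hc, hcv⟩ : ∃ c ∈ Icc (-R) R,
      (∫ u in (-R)..c, √(R ^ 2 - u ^ 2)) = A₁ / 2 + ε / 8 := by
    have hcont : ContinuousOn (fun c => ∫ u in (-R)..c, √(R ^ 2 - u ^ 2)) (Icc (-R) R) :=
      (intervalIntegral.continuous_primitive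
        (fun a b => (chord_cont R).intervalIntegrable a b) (-R)).continuousOn
    refine intermediate_value_Icc (by linarith) hcont ⟨?_, ?_⟩
    · simp only [intervalIntegral.integral_same]; positivity
    · simp only [half_disc R hR0]; linarith
  have hcv' : (∫ u in (-R)..(-c), √(R ^ 2 - u ^ 2)) = A₂ / 2 + ε / 8 := by
    rw [chord_refl]
    have := intervalIntegral.integral_add_adjacent_intervals (μ := MeasureTheory.volume)
      ((chord_cont R).intervalIntegrable (-R) c) ((chord_cont R).intervalIntegrable c R)
    rw [half_disc R hR0, hcv] at this
    linarith
  obtain ⟨F1, hF1, hF1c, hF1z, hF1s⟩ := squeeze (√(A₁ / π)) R Q c (Real.sqrt_nonneg _) hr1 hRQ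
    hc.1 hc.2 (by rw [rad A₁ hA₁, hcv]; linarith)
  obtain ⟨F2, hF2, hF2c, hF2z, hF2s⟩ := squeeze_neg (√(A₂ / π)) R Q (-c) (Real.sqrt_nonneg _)
    hr2 hRQ (by linarith [hc.2]) (by linarith [hc.1]) (by rw [rad A₂ hA₂, hcv']; linarith)
  let α : ℝ → ℝ := fun t => Real.smoothTransition (2 * t)
  let β : ℝ → ℝ := fun t => 1 - Real.smoothTransition (2 * t - 1)
  have hα : ContDiff ℝ (⊤ : ℕ∞) α := st_smooth.comp (by fun_prop)
  have hβ : ContDiff ℝ (⊤ : ℕ∞) β := contDiff_const.sub (st_smooth.comp (by fun_prop))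
  have dα := (contDiff_infty_iff_deriv.1 hα).2
  have dβ := (contDiff_infty_iff_deriv.1 hβ).2
  have hα01 : ∀ t, α t ∈ Icc (0 : ℝ) 1 := fun t =>
    ⟨Real.smoothTransition.nonneg _, Real.smoothTransition.le_one _⟩
  have hβ01 : ∀ t, β t ∈ Icc (0 : ℝ) 1 := fun t =>
    ⟨sub_nonneg.2 (Real.smoothTransition.le_one _),
      sub_le_self _ (Real.smoothTransition.nonneg _)⟩
  have hmax : ∀ f : ℝ → ℝ, (∀ t, f t ∈ Icc (0 : ℝ) 1) → ∀ t, f t = 1 → deriv f t = 0 := by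
    intro f hf t ht
    apply IsLocalMax.deriv_eq_zero
    apply Filter.Eventually.of_forall
    intro x
    rw [ht]; exact (hf x).2
  have hsplit : ∀ t, (β t = 1 ∧ deriv β t = 0) ∨ (α t = 1 ∧ deriv α t = 0) := by
    intro t
    rcases le_total (2 * t) 1 with h | h
    · have : β t = 1 := by
        change 1 - Real.smoothTransition (2 * t - 1) = 1
        rw [Real.smoothTransition.zero_of_nonpos (by linarith), sub_zero]
      exact Or.inl ⟨this, hmax β hβ01 t this⟩
    · have : α t = 1 := Real.smoothTransition.one_of_one_le h
      exact Or.inr ⟨this, hmax α hα01 t this⟩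
  have α0 : α 0 = 0 := by simp [α]
  have α1 : α 1 = 1 := Real.smoothTransition.one_of_one_le (by norm_num)
  have β0 : β 0 = 1 := by
    change 1 - Real.smoothTransition (2 * 0 - 1) = 1
    rw [Real.smoothTransition.zero_of_nonpos (by norm_num), sub_zero]
  have β1 : β 1 = 0 := by
    change 1 - Real.smoothTransition (2 * 1 - 1) = 0
    rw [Real.smoothTransition.one_of_one_le (by norm_num), sub_self]
  -- the curves
  choose γ hγ0 hγ using fun z : ℂ => ham_exists F1 hF1 hF1c ⟨0, by simp⟩ z
  choose δ hδ1 hδ using fun z : ℂ => ham_exists F2 hF2 hF2c ⟨1, by simp⟩ (γ z 1)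
  simp only at hγ0 hδ1
  refine ⟨fun p => deriv α p.1 * F1 (α p.1, p.2) + deriv β p.1 * F2 (β p.1, p.2),
    fun t z => γ z (α t) + δ z (β t) - γ z 1, ?_, ?_, ?_, ?_, ?_⟩
  · exact ((dα.comp contDiff_fst).mul
      (hF1.comp ((hα.comp contDiff_fst).prodMk contDiff_snd))).add
      ((dβ.comp contDiff_fst).mul (hF2.comp ((hβ.comp contDiff_fst).prodMk contDiff_snd)))
  · intro t z hz
    have : Q ≤ ‖z‖ ^ 2 := by rw [hQ, div_le_iff₀ hπ]; linarith
    simp [hF1z _ _ this, hF2z _ _ this]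
  · funext z
    simp [α0, β0, hγ0, hδ1]
  · intro z t
    exact concat F1 F2 hF1 hF2 α β hα hβ hα01 hβ01 hsplit (γ z) (δ z) (hγ z) (hδ z)
      (hδ1 z).symm t
  · rw [Set.disjoint_left]
    rintro _ ⟨z, hz, rfl⟩ hz'
    simp only [α1, β1, Set.mem_ofPred_eq, add_sub_cancel_left] at hz hz'
    have e1 := hF1s (γ z) (hγ z) (by rw [hγ0]; exact radle A₁ hA₁ z hz)
    have e2 := hF2s (δ z) (hδ z) (radle A₂ hA₂ _ hz')
    rw [hδ1] at e2
    linarith
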